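/- arXiv:2403.13403 — 5 statements merged into one kernel-verified Lean document; each statement's English description precedes it below -/
import Mathlib

section
/- (Correctness of E) For every set `A` and all `x ∈ A`, `y ∈ A`, one has `app (app (E A) x) y = ⊤` if and only if `x = y`. -/
/-!
For `x ∈ A` the graph `eqRow A x` of `y ↦ (x = y)` is a function from `A` to `𝔹`, so the pair
`(x, eqRow A x)` belongs to `E A`, and it is the only pair there with first component `x`
(`app_E`). Applying this row to `y ∈ A` gives `⊤` if `x = y` and `⊥` otherwise (`app_eqRow`).
Since `⊥ ≠ ⊤`, the value is `⊤` exactly when `x = y`.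
-/

/-!
Context: ZFC via Mathlib's `ZFSet`. `⊥ = ∅`, `⊤ = {∅}`, `𝔹 = {⊥, ⊤}`.
`app f x` is the unique `y` with `(x, y) ∈ f`; `E A` is the curried equality relation on `A`.
-/

namespace HOLSem

open Classical

/-- The set-theoretic Boolean `⊥ = ∅`. -/
def bfalse : ZFSet := ∅

/-- The set-theoretic Boolean `⊤ = {∅}`. -/
def btrue : ZFSet := {∅}

/-- The set of Booleans `𝔹 = {⊥, ⊤}`. -/
def bools : ZFSet := {bfalse, btrue}

/-- `app f x`: the unique `y` such that `(x, y) ∈ f` (when it exists). -/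
noncomputable def app (f x : ZFSet) : ZFSet :=
  if h : ∃! y, x.pair y ∈ f then h.exists.choose else ∅

/-- `E A`: the curried equality relation on `A`. -/
def E (A : ZFSet) : ZFSet :=
  ZFSet.pairSep
    (fun x g => g = ZFSet.pairSep
      (fun y b => (x = y → b = btrue) ∧ (x ≠ y → b = bfalse)) A bools)
    A (ZFSet.funs A bools)

/-- `app` computes the value of a relation at any point where that value is unique. -/
theorem app_eq_of_unique {f x y : ZFSet} (h : x.pair y ∈ f)
    (hu : ∀ z, x.pair z ∈ f → z = y) : app f x = y := by
  have hex : ∃! z, x.pair z ∈ f := ⟨y, h, hu⟩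
  rw [app, dif_pos hex]
  exact hu _ hex.exists.choose_spec

theorem pair_mem_pairSep {p : ZFSet → ZFSet → Prop} {A B a b : ZFSet} :
    a.pair b ∈ ZFSet.pairSep p A B ↔ a ∈ A ∧ b ∈ B ∧ p a b := by
  rw [ZFSet.mem_pairSep]
  constructor
  · rintro ⟨a', ha, b', hb, h, hp⟩
    obtain ⟨rfl, rfl⟩ := ZFSet.pair_inj.1 h
    exact ⟨ha, hb, hp⟩
  · rintro ⟨ha, hb, hp⟩
    exact ⟨a, ha, b, hb, rfl, hp⟩

/-- The graph of `y ↦ (x = y)`, the value that `E A` takes at `x`. -/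
def eqRow (A x : ZFSet) : ZFSet :=
  ZFSet.pairSep (fun y b => (x = y → b = btrue) ∧ (x ≠ y → b = bfalse)) A bools

theorem pair_mem_eqRow {A x y b : ZFSet} :
    y.pair b ∈ eqRow A x ↔ y ∈ A ∧ b = if x = y then btrue else bfalse := by
  rw [eqRow, pair_mem_pairSep]
  by_cases hxy : x = y <;> simp +contextual [hxy, bools]

/-- Membership in the function space is needed because `E A` only retains pairs whose
second component lies in `A ⇒ 𝔹`. -/
theorem eqRow_mem_funs (A x : ZFSet) : eqRow A x ∈ ZFSet.funs A bools := by
  rw [ZFSet.mem_funs]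
  refine ⟨fun z hz => ?_, fun y hy => ?_⟩
  · obtain ⟨a, ha, b, hb, rfl, -⟩ := ZFSet.mem_pairSep.1 hz
    exact ZFSet.pair_mem_prod.2 ⟨ha, hb⟩
  · exact ⟨_, pair_mem_eqRow.2 ⟨hy, rfl⟩, fun b hb => (pair_mem_eqRow.1 hb).2⟩

theorem app_E {A x : ZFSet} (hx : x ∈ A) : app (E A) x = eqRow A x :=
  app_eq_of_unique (pair_mem_pairSep.2 ⟨hx, eqRow_mem_funs A x, rfl⟩)
    fun _ hg => (pair_mem_pairSep.1 hg).2.2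

theorem app_eqRow {A x y : ZFSet} (hy : y ∈ A) :
    app (eqRow A x) y = if x = y then btrue else bfalse :=
  app_eq_of_unique (pair_mem_eqRow.2 ⟨hy, rfl⟩) fun _ hb => (pair_mem_eqRow.1 hb).2

theorem bfalse_ne_btrue : bfalse ≠ btrue := fun h =>
  ZFSet.notMem_empty ∅ (show ∅ ∈ bfalse from h ▸ ZFSet.mem_singleton.2 rfl)

/-- (Correctness of E) For every set `A` and all `x ∈ A`, `y ∈ A`,
`app (app (E A) x) y = ⊤` iff `x = y`. -/
theorem E_correct (A x y : ZFSet) (hx : x ∈ A) (hy : y ∈ A) :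
    app (app (E A) x) y = btrue ↔ x = y := by
  rw [app_E hx, app_eqRow hy]
  by_cases hxy : x = y <;> simp [hxy, bfalse_ne_btrue]

end HOLSem
end

section
/- (Least fixpoint of the ADT constructor operator) The set `A` is the least fixpoint of `F`: one has `F A = A`, and for every set `B` with `F B ⊆ B`, `A ⊆ B`. -/
/-!
This is Kleene's fixpoint argument. `F` is monotone because matching is, so the stages `f n` form
an increasing chain and every `B` with `F B ⊆ B` contains all of them by induction. `F` is also
finitary: an argument list has finitely many entries, each lying in some stage, so a list that
matches relative to `A = ⋃ n, f n` already matches relative to a single stage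
(`Matches.exists_stage`). This gives `F A ⊆ A`. Conversely `f (n + 1) = F (f n) ⊆ F A`.
-/

/-!
Context: ZFC via Mathlib's `ZFSet`; `(x, y)` is the Kuratowski pair `ZFSet.pair x y`.
An ADT specification consists of `m : ℕ` and, for each `i : Fin m`, a list
`sig i : List (Option ZFSet)` of argument types of the `i`-th constructor
(`some S` is the fixed set `S`, `none` a self-reference to the ADT).
`F H` is the set of all `c i xs` with `xs` matching `sig i` relative to `H`
(it exists by replacement and union, so we take it together with its membership
characterization as a hypothesis), `f 0 = ∅`, `f (n+1) = F (f n)`, and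
`A` satisfies `x ∈ A ↔ ∃ n, x ∈ f n`.
-/

namespace ADT

/-- Tuple encoding of lists of sets: `tup [] = ∅`, `tup (x :: xs) = (x, tup xs)`. -/
def tup : List ZFSet → ZFSet
  | [] => ∅
  | x :: xs => x.pair (tup xs)

/-- `tag i`: the von Neumann natural `i` as a `ZFSet`. -/
def tag : ℕ → ZFSet
  | 0 => ∅
  | n + 1 => insert (tag n) (tag n)

/-- `xs` matches the signature `s` relative to the set `H`: the lists have equal length
and at each position `k`, `xs[k] ∈ S` if `s[k] = some S`, and `xs[k] ∈ H` if `s[k] = none`. -/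
def Matches (H : ZFSet) : List ZFSet → List (Option ZFSet) → Prop :=
  List.Forall₂ (fun x o => match o with | some S => x ∈ S | none => x ∈ H)

/-- The `i`-th constructor applied to arguments `xs`: `c i xs = tup (tag i :: xs)`. -/
def c {m : ℕ} (i : Fin m) (xs : List ZFSet) : ZFSet :=
  tup (tag i.val :: xs)

theorem Matches.mono {H K : ZFSet} (h : H ⊆ K) {xs : List ZFSet} {s : List (Option ZFSet)}
    (hm : Matches H xs s) : Matches K xs s := by
  refine List.Forall₂.imp ?_ hm
  rintro x (_ | S) hx
  · exact h hx
  · exact hx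

/-- Finitariness of matching: along an increasing chain, a list that matches relative to the
union matches relative to one stage, namely the latest one needed by any of its entries. -/
theorem Matches.exists_stage {f : ℕ → ZFSet} (hf : ∀ a b : ℕ, a ≤ b → f a ⊆ f b) {A : ZFSet}
    (hA : ∀ x ∈ A, ∃ n : ℕ, x ∈ f n) {xs : List ZFSet} {s : List (Option ZFSet)}
    (hm : Matches A xs s) : ∃ n : ℕ, Matches (f n) xs s := by
  unfold Matches at hm
  induction hm with
  | nil => exact ⟨0, List.Forall₂.nil⟩
  | @cons x o xs s hx _ ih =>
    obtain ⟨n, hn⟩ := ih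
    cases o with
    | some S => exact ⟨n, List.Forall₂.cons hx hn⟩
    | none =>
      obtain ⟨k, hk⟩ := hA x hx
      exact ⟨max k n, List.Forall₂.cons (hf _ _ (le_max_left k n) hk)
        (Matches.mono (hf _ _ (le_max_right k n)) hn)⟩

/-- (Least fixpoint of the ADT constructor operator) The set `A` is the least fixpoint
of `F`: `F A = A`, and for every set `B` with `F B ⊆ B`, `A ⊆ B`. -/
theorem A_least_fixpoint (m : ℕ) (sig : Fin m → List (Option ZFSet))
    (F : ZFSet → ZFSet)
    (hF : ∀ H x : ZFSet, x ∈ F H ↔ ∃ i : Fin m, ∃ xs : List ZFSet,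
      Matches H xs (sig i) ∧ x = c i xs)
    (f : ℕ → ZFSet) (hf0 : f 0 = ∅) (hfs : ∀ n : ℕ, f (n + 1) = F (f n))
    (A : ZFSet) (hA : ∀ x : ZFSet, x ∈ A ↔ ∃ n : ℕ, x ∈ f n) :
    F A = A ∧ ∀ B : ZFSet, F B ⊆ B → A ⊆ B := by
  have hmono : ∀ {H K : ZFSet}, H ⊆ K → F H ⊆ F K := by
    intro H K h x hx
    obtain ⟨i, xs, hm, rfl⟩ := (hF H x).1 hx
    exact (hF K _).2 ⟨i, xs, hm.mono h, rfl⟩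
  have hstep : ∀ n : ℕ, f n ⊆ f (n + 1) := by
    intro n
    induction n with
    | zero => rw [hf0]; exact ZFSet.empty_subset _
    | succ n ih => rw [hfs n, hfs (n + 1)]; exact hmono ih
  have hchain : ∀ a b : ℕ, a ≤ b → f a ⊆ f b := by
    intro a b hab
    induction hab with
    | refl => exact fun _ hx => hx
    | step _ ih => exact fun _ hx => hstep _ (ih hx)
  refine ⟨ZFSet.ext fun x => ⟨fun hx => ?_, fun hx => ?_⟩, fun B hB x hx => ?_⟩
  · obtain ⟨i, xs, hm, rfl⟩ := (hF A x).1 hx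
    obtain ⟨n, hn⟩ := hm.exists_stage hchain fun y hy => (hA y).1 hy
    refine (hA _).2 ⟨n + 1, ?_⟩
    rw [hfs]
    exact (hF _ _).2 ⟨i, xs, hn, rfl⟩
  · obtain ⟨n, hn⟩ := (hA x).1 hx
    have hn' := hstep n hn
    rw [hfs] at hn'
    exact hmono (fun y hy => (hA y).2 ⟨n, hy⟩) hn'
  · have hfB : ∀ n : ℕ, f n ⊆ B := by
      intro n
      induction n with
      | zero => rw [hf0]; exact ZFSet.empty_subset _
      | succ n ih => rw [hfs]; exact fun _ hy => hB (hmono ih hy)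
    obtain ⟨n, hn⟩ := (hA x).1 hx
    exact hfB n hn

end ADT
end

section
/- (Injectivity of each ADT constructor) For every `i : Fin m` and all lists `xs`, `ys : List ZFSet` matching `sig i` relative to `A`, if `c i xs = c i ys` then `xs = ys` (i.e. all corresponding components are equal). -/
/-!
Context: ZFC via Mathlib's `ZFSet`; `(x, y)` is the Kuratowski pair `ZFSet.pair x y`.
An ADT specification consists of `m : ℕ` and, for each `i : Fin m`, a list
`sig i : List (Option ZFSet)` of argument types of the `i`-th constructor
(`some S` is the fixed set `S`, `none` a self-reference to the ADT).
`F H` is the set of all `c i xs` with `xs` matching `sig i` relative to `H`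
(it exists by replacement and union, so we take it together with its membership
characterization as a hypothesis), `f 0 = ∅`, `f (n+1) = F (f n)`, and
`A` satisfies `x ∈ A ↔ ∃ n, x ∈ f n`.
-/

namespace ADT

/-- No length hypothesis is needed: a Kuratowski pair is nonempty, so it never equals
`tup [] = ∅`, and the encoding determines the length of the list. -/
theorem tup_injective : Function.Injective tup
  | [], [], _ => rfl
  | [], y :: ys, h => by
    have hy : ({y} : ZFSet) ∈ tup (y :: ys) := by simp [tup, ZFSet.pair]
    rw [← h] at hy
    exact absurd hy (ZFSet.notMem_empty _)
  | x :: xs, [], h => by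
    have hx : ({x} : ZFSet) ∈ tup (x :: xs) := by simp [tup, ZFSet.pair]
    rw [h] at hx
    exact absurd hx (ZFSet.notMem_empty _)
  | x :: xs, y :: ys, h => by
    obtain ⟨hxy, ht⟩ := ZFSet.pair_inj.mp h
    rw [hxy, tup_injective ht]

/-- (Injectivity of each ADT constructor) For every `i : Fin m` and all lists `xs`, `ys`
matching `sig i` relative to `A`, if `c i xs = c i ys` then `xs = ys`. -/
theorem constructor_injective (m : ℕ) (sig : Fin m → List (Option ZFSet))
    (F : ZFSet → ZFSet)
    (hF : ∀ H x : ZFSet, x ∈ F H ↔ ∃ i : Fin m, ∃ xs : List ZFSet,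
      Matches H xs (sig i) ∧ x = c i xs)
    (f : ℕ → ZFSet) (hf0 : f 0 = ∅) (hfs : ∀ n : ℕ, f (n + 1) = F (f n))
    (A : ZFSet) (hA : ∀ x : ZFSet, x ∈ A ↔ ∃ n : ℕ, x ∈ f n)
    (i : Fin m) (xs ys : List ZFSet)
    (hxs : Matches A xs (sig i)) (hys : Matches A ys (sig i))
    (h : c i xs = c i ys) : xs = ys := by
  exact (List.cons.inj (tup_injective h)).2

end ADT
end

section
/- (Structural induction for ADTs) Let `P : ZFSet → Prop`. Suppose that for every `i : Fin m` and every list `xs` matching `sig i` relative to `A` such that `P` holds of every entry of `xs` occurring at a self-reference position (a position `k` with `(sig i)[k] = none`), one has `P (c i xs)`. Then `P x` holds for every `x ∈ A`. -/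
/-!
Context: ZFC via Mathlib's `ZFSet`; `(x, y)` is the Kuratowski pair `ZFSet.pair x y`.
An ADT specification consists of `m : ℕ` and, for each `i : Fin m`, a list
`sig i : List (Option ZFSet)` of argument types of the `i`-th constructor
(`some S` is the fixed set `S`, `none` a self-reference to the ADT).
`F H` is the set of all `c i xs` with `xs` matching `sig i` relative to `H`
(it exists by replacement and union, so we take it together with its membership
characterization as a hypothesis), `f 0 = ∅`, `f (n+1) = F (f n)`, and
`A` satisfies `x ∈ A ↔ ∃ n, x ∈ f n`.
-/

namespace ADT

/-- (Structural induction for ADTs) Suppose that for every `i : Fin m` and every list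
`xs` matching `sig i` relative to `A` such that `P` holds of every entry of `xs` at a
self-reference position (a position `k` with `(sig i)[k] = none`), one has `P (c i xs)`.
Then `P x` holds for every `x ∈ A`. -/
theorem structural_induction (m : ℕ) (sig : Fin m → List (Option ZFSet))
    (F : ZFSet → ZFSet)
    (hF : ∀ H x : ZFSet, x ∈ F H ↔ ∃ i : Fin m, ∃ xs : List ZFSet,
      Matches H xs (sig i) ∧ x = c i xs)
    (f : ℕ → ZFSet) (hf0 : f 0 = ∅) (hfs : ∀ n : ℕ, f (n + 1) = F (f n))
    (A : ZFSet) (hA : ∀ x : ZFSet, x ∈ A ↔ ∃ n : ℕ, x ∈ f n)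
    (P : ZFSet → Prop)
    (step : ∀ i : Fin m, ∀ xs : List ZFSet, Matches A xs (sig i) →
      (∀ (k : ℕ) (hk : k < xs.length) (hk' : k < (sig i).length),
        (sig i).get ⟨k, hk'⟩ = none → P (xs.get ⟨k, hk⟩)) →
      P (c i xs)) :
    ∀ x ∈ A, P x := by
  -- Induction on the stage `n`: self-reference arguments of an element of `f (n + 1)` lie in `f n`,
  -- so `P` holds of them, and `f n ⊆ A` turns matching relative to `f n` into matching
  -- relative to `A`.
  have key : ∀ n : ℕ, ∀ x ∈ f n, P x := by
    intro n
    induction n with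
    | zero =>
      intro x hx
      rw [hf0] at hx
      exact absurd hx (ZFSet.notMem_empty x)
    | succ n ih =>
      intro x hx
      rw [hfs, hF] at hx
      obtain ⟨i, xs, hxs, rfl⟩ := hx
      refine step i xs (List.Forall₂.imp ?_ hxs) ?_
      · rintro y (_ | S) hy
        · exact (hA y).2 ⟨n, hy⟩
        · exact hy
      · intro k hk hk' hnone
        have h := List.Forall₂.get hxs hk hk'
        rw [hnone] at h
        exact ih _ h
  intro x hx
  obtain ⟨n, hn⟩ := (hA x).1 hx
  exact key n x hn

end ADT
end

section
/- (Transfinite recursion) Let `F : ZFSet → ZFSet` be a class function and let `α` be a von Neumann ordinal. Then there exists a unique set `f` such that `f` is a function with domain `α` (i.e. `f` is a set of ordered pairs, for every `β ∈ α` there is exactly one `y` with `(β, y) ∈ f`, and every element of `f` is a pair `(β, y)` with `β ∈ α`) and for every `β ∈ α`, `app f β = F (f ↾ β)`, where `f ↾ β = {p ∈ f | ∃ x ∈ β, ∃ y, p = (x, y)}` is the restriction of `f` to `β`. -/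
/-!
By well-founded recursion on `∈` over the whole universe there is a class function `G = recFun F`
with `G x = F {(y, G y) | y ∈ x}`. Its graph over `α` is the required `f`: transitivity of `α`
makes the restriction of that graph to `β ∈ α` the graph of `G` over `β` (`restrict_eq_graph`).
For uniqueness, `∈`-induction shows that any solution agrees with `G` at each `β ∈ α`, since the
restriction of the solution to `β` is then again the graph of `G` over `β`; and a function with
domain `α` is determined by its values (`IsFuncOn.eq_graph`).
-/

/-!
Context: ZFC via Mathlib's `ZFSet`; `(x, y)` is the Kuratowski pair `ZFSet.pair x y`.
A set is transitive if every element is a subset of it; a von Neumann ordinal is a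
transitive set all of whose elements are transitive. `app f x` is the unique `y` with
`(x, y) ∈ f`; `f ↾ β = {p ∈ f | ∃ x ∈ β, ∃ y, p = (x, y)}`.
-/

namespace TransRec

open Classical

/-- A set `x` is transitive if every element of `x` is a subset of `x`. -/
def IsTransitive (x : ZFSet) : Prop := ∀ y ∈ x, y ⊆ x

/-- A von Neumann ordinal: a transitive set all of whose elements are transitive. -/
def IsOrdinal (α : ZFSet) : Prop := IsTransitive α ∧ ∀ x ∈ α, IsTransitive x

/-- `f` is a function with domain `α`: every element of `f` is a pair `(β, y)` with
`β ∈ α`, and for every `β ∈ α` there is exactly one `y` with `(β, y) ∈ f`. -/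
def IsFuncOn (f α : ZFSet) : Prop :=
  (∀ p ∈ f, ∃ β ∈ α, ∃ y : ZFSet, p = β.pair y) ∧ ∀ β ∈ α, ∃! y, β.pair y ∈ f

/-- `app f x`: the unique `y` such that `(x, y) ∈ f` (when it exists). -/
noncomputable def app (f x : ZFSet) : ZFSet :=
  if h : ∃! y, x.pair y ∈ f then h.exists.choose else ∅

/-- `f ↾ β = {p ∈ f | ∃ x ∈ β, ∃ y, p = (x, y)}`, the restriction of `f` to `β`. -/
def restrict (f β : ZFSet) : ZFSet :=
  ZFSet.sep (fun p => ∃ x ∈ β, ∃ y : ZFSet, p = x.pair y) f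

/-- The graph `{(y, g y) | y ∈ x}` of the class function `g` over the set `x`; it is a set by
replacement, which Mathlib states for definable `g`, and classically every `g` is definable. -/
noncomputable def graph (g : ZFSet → ZFSet) (x : ZFSet) : ZFSet :=
  letI : ZFSet.Definable₁ g := Classical.allZFSetDefinable _
  ZFSet.map g x

theorem mem_graph {g : ZFSet → ZFSet} {x p : ZFSet} :
    p ∈ graph g x ↔ ∃ y ∈ x, y.pair (g y) = p := by
  let : ZFSet.Definable₁ g := Classical.allZFSetDefinable _
  exact ZFSet.mem_map

theorem pair_mem_graph {g : ZFSet → ZFSet} {x y z : ZFSet} :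
    y.pair z ∈ graph g x ↔ y ∈ x ∧ z = g y := by
  rw [mem_graph]
  constructor
  · rintro ⟨w, hw, h⟩
    obtain ⟨rfl, rfl⟩ := ZFSet.pair_inj.1 h
    exact ⟨hw, rfl⟩
  · rintro ⟨hy, rfl⟩
    exact ⟨y, hy, rfl⟩

theorem graph_congr {g h : ZFSet → ZFSet} {x : ZFSet} (H : ∀ y ∈ x, g y = h y) :
    graph g x = graph h x := by
  ext p
  rw [mem_graph, mem_graph]
  exact exists_congr fun y => and_congr_right fun hy => by rw [H y hy]

/-- The class function on all sets with `recFun F x = F {(y, recFun F y) | y ∈ x}`. The value `∅`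
off `x` only makes the recursive call total; the graph over `x` never sees it. -/
noncomputable def recFun (F : ZFSet → ZFSet) : ZFSet → ZFSet :=
  ZFSet.mem_wf.fix fun x ih => F (graph (fun y => if h : y ∈ x then ih y h else ∅) x)

theorem recFun_eq (F : ZFSet → ZFSet) (x : ZFSet) : recFun F x = F (graph (recFun F) x) := by
  rw [recFun, WellFounded.fix_eq]
  exact congrArg F (graph_congr fun y hy => dif_pos hy)

theorem app_eq_iff {f x y : ZFSet} (h : ∃! y, x.pair y ∈ f) : app f x = y ↔ x.pair y ∈ f := by
  have hs : x.pair (app f x) ∈ f := by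
    rw [app, dif_pos h]
    exact h.exists.choose_spec
  exact ⟨fun e => e ▸ hs, fun hy => h.unique hs hy⟩

theorem isFuncOn_graph (g : ZFSet → ZFSet) (α : ZFSet) : IsFuncOn (graph g α) α := by
  refine ⟨fun p hp => ?_, fun β hβ => ⟨g β, pair_mem_graph.2 ⟨hβ, rfl⟩, fun y hy =>
    (pair_mem_graph.1 hy).2⟩⟩
  obtain ⟨y, hy, rfl⟩ := mem_graph.1 hp
  exact ⟨y, hy, _, rfl⟩

theorem restrict_eq_graph {f α β : ZFSet} {g : ZFSet → ZFSet} (hf : IsFuncOn f α) (hβ : β ⊆ α)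
    (hg : ∀ x ∈ β, app f x = g x) : restrict f β = graph g β := by
  ext p
  rw [restrict, ZFSet.mem_sep, mem_graph]
  constructor
  · rintro ⟨hp, x, hx, y, rfl⟩
    exact ⟨x, hx, by rw [← hg x hx, (app_eq_iff (hf.2 x (hβ hx))).2 hp]⟩
  · rintro ⟨x, hx, rfl⟩
    exact ⟨(app_eq_iff (hf.2 x (hβ hx))).1 (hg x hx), x, hx, _, rfl⟩

theorem IsFuncOn.eq_graph {f α : ZFSet} {g : ZFSet → ZFSet} (hf : IsFuncOn f α)
    (hg : ∀ x ∈ α, app f x = g x) : f = graph g α := by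
  rw [← restrict_eq_graph hf (fun _ h => h) hg]
  ext p
  rw [restrict, ZFSet.mem_sep]
  exact ⟨fun hp => ⟨hp, hf.1 p hp⟩, And.left⟩

/-- (Transfinite recursion) For every class function `F : ZFSet → ZFSet` and every von
Neumann ordinal `α`, there exists a unique function `f` with domain `α` such that
`app f β = F (f ↾ β)` for every `β ∈ α`. -/
theorem transfinite_recursion (F : ZFSet → ZFSet) (α : ZFSet) (hα : IsOrdinal α) :
    ∃! f : ZFSet, IsFuncOn f α ∧ ∀ β ∈ α, app f β = F (restrict f β) := by
  have happ : ∀ β ∈ α, app (graph (recFun F) α) β = recFun F β := fun β hβ =>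
    (app_eq_iff ((isFuncOn_graph _ α).2 β hβ)).2 (pair_mem_graph.2 ⟨hβ, rfl⟩)
  refine ⟨graph (recFun F) α, ⟨isFuncOn_graph _ α, fun β hβ => ?_⟩, ?_⟩
  · rw [happ β hβ, recFun_eq, restrict_eq_graph (isFuncOn_graph _ α) (hα.1 β hβ)
      fun x hx => happ x (hα.1 β hβ hx)]
  · rintro f ⟨hf, hrec⟩
    refine hf.eq_graph fun β => ?_
    induction β using ZFSet.inductionOn with
    | h β ih =>
      intro hβ
      rw [hrec β hβ, recFun_eq, restrict_eq_graph hf (hα.1 β hβ)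
        fun x hx => ih x hx (hα.1 β hβ hx)]

end TransRec
end
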